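/- arXiv:2601.23239 — 3 statements merged into one kernel-verified Lean document; each statement's English description precedes it below -/
import Mathlib

section
/- Let ρ ∈ (0, 1) and set k = ρ/√(1 − ρ²). Let W₁, W₂ be independent standard normal random variables and put Z₁ = W₁ and Z₂ = ρW₁ + √(1 − ρ²)·W₂ (so Z₁, Z₂ are standard normals with correlation ρ). Then there exist constants C > 0 and t₀ > 0 such that for all t ≥ t₀: | P(Z₁ ≥ t and Z₂ ≥ ρt) − φ(t)·( 1/(2t) + k/(√(2π) t²) − 1/(2t³) ) | ≤ C·φ(t)/t⁴. -/
/-!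
Conditioning on `W₁ = t + u` and factoring `φ(t + u) = φ(t) exp(-tu) exp(-u²/2)` gives
`P(W₁ ≥ t, ρW₁ + σW₂ ≥ ρt) = φ(t) ∫₀^∞ exp(-tu) exp(-u²/2) Φ(ku) du` with `k = ρ/σ` and `Φ` the
standard normal distribution function. This Laplace transform is expanded by Watson's lemma from
`exp(-u²/2) Φ(ku) = 1/2 + ku/√(2π) - u²/4 + O(u³)`.
-/

open MeasureTheory ProbabilityTheory

/-- The standard normal density `φ(s) = exp(−s²/2)/√(2π)`. -/
noncomputable def stdNormalPDF (s : ℝ) : ℝ := Real.exp (-s ^ 2 / 2) / Real.sqrt (2 * Real.pi)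

open Set

open scoped Nat

section ExpBounds

lemma abs_exp_neg_sub_one_le {w : ℝ} (hw : 0 ≤ w) : |Real.exp (-w) - 1| ≤ w := by
  rw [abs_le]
  constructor
  · linarith [Real.one_sub_le_exp_neg w]
  · linarith [Real.exp_le_one_iff.mpr (neg_nonpos.mpr hw)]

lemma exp_neg_le_quadratic_of_nonneg {w : ℝ} (hw : 0 ≤ w) :
    Real.exp (-w) ≤ 1 - w + w ^ 2 / 2 := by
  have hpos : 0 ≤ 1 - w + w ^ 2 / 2 := by linarith [sq_nonneg (w - 1)]
  rw [Real.exp_neg, inv_le_iff_one_le_mul₀ (Real.exp_pos w)]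
  calc 1 ≤ 1 + w ^ 4 / 4 := le_add_of_nonneg_right (by positivity)
    _ = (1 - w + w ^ 2 / 2) * (1 + w + w ^ 2 / 2) := by ring
    _ ≤ (1 - w + w ^ 2 / 2) * Real.exp w :=
        mul_le_mul_of_nonneg_left (Real.quadratic_le_exp_of_nonneg hw) hpos

lemma abs_exp_neg_sq_half_sub_le (u : ℝ) :
    |Real.exp (-u ^ 2 / 2) - 1 + u ^ 2 / 2| ≤ |u| ^ 3 / 4 := by
  set w := u ^ 2 / 2 with hw_def
  have hw : 0 ≤ w := by positivity
  set D := Real.exp (-w) - 1 + w with hD_def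
  have hD_nonneg : 0 ≤ D := by linarith [Real.one_sub_le_exp_neg w]
  have hD_le : D ≤ w := by linarith [Real.exp_le_one_iff.mpr (neg_nonpos.mpr hw)]
  have hD_le_sq : D ≤ w ^ 2 / 2 := by linarith [exp_neg_le_quadratic_of_nonneg hw]
  rw [neg_div, ← hw_def, ← hD_def]
  -- The geometric mean of the bounds `w` and `w² / 2` is the required multiple of `|u|³`.
  refine abs_le_of_sq_le_sq ?_ (by positivity)
  calc D ^ 2 = D * D := sq D
    _ ≤ w * (w ^ 2 / 2) := by gcongr
    _ = (|u| ^ 3 / 4) ^ 2 := by rw [hw_def, ← sq_abs u]; ring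

end ExpBounds

section Watson

variable {t : ℝ}

lemma integrableOn_exp_neg_mul_mul_pow (n : ℕ) (ht : 0 < t) :
    IntegrableOn (fun u : ℝ ↦ Real.exp (-(t * u)) * u ^ n) (Ioi 0) := by
  have hn : (-1 : ℝ) < n := neg_one_lt_zero.trans_le n.cast_nonneg
  simpa [mul_comm] using integrableOn_rpow_mul_exp_neg_mul_rpow hn one_pos ht

lemma integral_exp_neg_mul_mul_pow (n : ℕ) (ht : 0 < t) :
    ∫ u in Ioi (0 : ℝ), Real.exp (-(t * u)) * u ^ n = n ! / t ^ (n + 1) := by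
  have hGamma := Real.integral_rpow_mul_exp_neg_mul_Ioi (a := n + 1) (by positivity) ht
  rw [add_sub_cancel_right, Real.Gamma_nat_eq_factorial, ← Nat.cast_add_one] at hGamma
  simp_rw [Real.rpow_natCast, mul_comm (_ ^ n)] at hGamma
  rw [hGamma, one_div_pow, one_div_mul_eq_div]

variable {E : Type*} [NormedAddCommGroup E] [NormedSpace ℝ E] {n : ℕ}

lemma integrableOn_exp_neg_mul_smul_sum (a : Fin n → E) (ht : 0 < t) :
    IntegrableOn (fun u : ℝ ↦ Real.exp (-(t * u)) • ∑ i : Fin n, u ^ (i : ℕ) • a i) (Ioi 0) := by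
  simp_rw [Finset.smul_sum, smul_smul]
  exact integrable_finsetSum _ fun i _ ↦ (integrableOn_exp_neg_mul_mul_pow i ht).smul_const (a i)

lemma integral_exp_neg_mul_smul_sum [CompleteSpace E] (a : Fin n → E) (ht : 0 < t) :
    ∫ u in Ioi (0 : ℝ), Real.exp (-(t * u)) • ∑ i : Fin n, u ^ (i : ℕ) • a i =
      ∑ i : Fin n, ((i : ℕ)! / t ^ ((i : ℕ) + 1)) • a i := by
  simp_rw [Finset.smul_sum, smul_smul]
  rw [integral_finsetSum _
    fun (i : Fin n) _ ↦ (integrableOn_exp_neg_mul_mul_pow i ht).smul_const (a i)]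
  simp_rw [integral_smul_const, integral_exp_neg_mul_mul_pow _ ht]

theorem norm_laplace_sub_sum_le_of_norm_sub_sum_le [CompleteSpace E] {a : Fin n → E}
    {g : ℝ → E} {M : ℝ}
    (ht : 0 < t) (hg : AEStronglyMeasurable g (volume.restrict (Ioi 0)))
    (hgM : ∀ u > 0, ‖g u - ∑ i : Fin n, u ^ (i : ℕ) • a i‖ ≤ M * u ^ n) :
    ‖(∫ u in Ioi (0 : ℝ), Real.exp (-(t * u)) • g u) -
        ∑ i : Fin n, ((i : ℕ)! / t ^ ((i : ℕ) + 1)) • a i‖ ≤ M * n ! / t ^ (n + 1) := by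
  have hpoly := integrableOn_exp_neg_mul_smul_sum a ht
  have hmajorant := (integrableOn_exp_neg_mul_mul_pow n ht).const_mul M
  have hbound : ∀ᵐ u ∂volume.restrict (Ioi (0 : ℝ)),
      ‖Real.exp (-(t * u)) • g u - Real.exp (-(t * u)) • ∑ i : Fin n, u ^ (i : ℕ) • a i‖ ≤
        M * (Real.exp (-(t * u)) * u ^ n) := by
    filter_upwards [ae_restrict_mem measurableSet_Ioi] with u hu
    rw [← smul_sub, norm_smul, Real.norm_of_nonneg (Real.exp_nonneg _), mul_left_comm]
    gcongr
    exact hgM u hu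
  have hexp : Continuous fun u ↦ Real.exp (-(t * u)) := by fun_prop
  have hremainder := hmajorant.mono' ((hexp.aestronglyMeasurable.smul hg).sub hpoly.1) hbound
  have hfull : IntegrableOn (fun u ↦ Real.exp (-(t * u)) • g u) (Ioi 0) :=
    (hremainder.add hpoly).congr (.of_forall fun u ↦ sub_add_cancel _ _)
  rw [← integral_exp_neg_mul_smul_sum a ht, ← integral_sub hfull hpoly]
  refine (norm_integral_le_of_norm_le hmajorant hbound).trans_eq ?_
  rw [integral_const_mul, integral_exp_neg_mul_mul_pow n ht, mul_div_assoc]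

end Watson

section SymmetricMeasure

variable (ν : Measure ℝ) [IsProbabilityMeasure ν] [ν.IsNegInvariant]

lemma measureReal_Ici_neg_eq_cdf (x : ℝ) : ν.real (Ici (-x)) = cdf ν x := by
  rw [cdf_eq_real, measureReal_def, measureReal_def, ← Measure.measure_preimage_neg ν (Iic x)]
  simp

lemma cdf_zero_eq_half [NullSingletonClass ν] : cdf ν 0 = 1 / 2 := by
  have hsplit := probReal_add_probReal_compl (μ := ν) (measurableSet_Iic (a := (0 : ℝ)))
  have hupper : ν.real (Ioi 0) = cdf ν 0 := by
    rw [← measureReal_Ici_neg_eq_cdf, neg_zero]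
    exact measureReal_congr Ioi_ae_eq_Ici
  rw [compl_Iic, hupper, ← cdf_eq_real] at hsplit
  linarith

lemma measureReal_mem_and_nonneg_add_eq_setIntegral_cdf {Ω α : Type*} [MeasurableSpace Ω]
    [MeasurableSpace α] {μ : Measure Ω} {ν₁ : Measure α} {X : Ω → α} {Y : Ω → ℝ}
    (hX : HasLaw X ν₁ μ) (hY : HasLaw Y ν μ) (hXY : IndepFun X Y μ)
    {A : Set α} (hA : MeasurableSet A) {h : α → ℝ} (hh : Measurable h) :
    μ.real {ω | X ω ∈ A ∧ 0 ≤ h (X ω) + Y ω} = ∫ x in A, cdf ν (h x) ∂ν₁ := by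
  have : IsProbabilityMeasure μ := hY.isProbabilityMeasure
  have : IsProbabilityMeasure ν₁ := hX.isProbabilityMeasure_iff.mp inferInstance
  have hjoint : μ.map (fun ω ↦ (X ω, Y ω)) = ν₁.prod ν := by
    rw [(indepFun_iff_map_prod_eq_prod_map_map hX.aemeasurable hY.aemeasurable).mp hXY,
      hX.map_eq, hY.map_eq]
  set S : Set (α × ℝ) := {p | p.1 ∈ A ∧ 0 ≤ h p.1 + p.2}
  have hS : MeasurableSet S :=
    (measurable_fst hA).inter (measurableSet_le measurable_const
      ((hh.comp measurable_fst).add measurable_snd))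
  have hslice (x : α) : ν.real (Prod.mk x ⁻¹' S) = A.indicator (fun x ↦ cdf ν (h x)) x := by
    by_cases hx : x ∈ A
    · rw [indicator_of_mem hx, ← measureReal_Ici_neg_eq_cdf]
      congr 1
      ext y
      simp [S, hx, neg_le_iff_add_nonneg']
    · simp [S, hx]
  calc μ.real {ω | X ω ∈ A ∧ 0 ≤ h (X ω) + Y ω}
      = (ν₁.prod ν).real S := by
        rw [← hjoint, map_measureReal_apply_of_aemeasurable
          (hX.aemeasurable.prodMk hY.aemeasurable) hS]
        rfl
    _ = ∫ x, ν.real (Prod.mk x ⁻¹' S) ∂ν₁ := by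
        rw [measureReal_def, Measure.prod_apply hS]
        exact (integral_toReal (measurable_measure_prodMk_left hS).aemeasurable
          (.of_forall fun x ↦ measure_lt_top _ _)).symm
    _ = ∫ x in A, cdf ν (h x) ∂ν₁ := by simp_rw [hslice, integral_indicator hA]

end SymmetricMeasure

section Gaussian

open scoped NNReal

instance isNegInvariant_gaussianReal_zero (v : ℝ≥0) : (gaussianReal 0 v).IsNegInvariant where
  neg_eq_self := gaussianReal_map_neg.trans (by rw [neg_zero])

lemma cdf_gaussianReal_sub_cdf_gaussianReal (m : ℝ) {v : ℝ≥0} (hv : v ≠ 0) (a b : ℝ) :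
    cdf (gaussianReal m v) b - cdf (gaussianReal m v) a = ∫ x in a..b, gaussianPDFReal m v x := by
  have hcdf (c : ℝ) : cdf (gaussianReal m v) c = ∫ x in Iic c, gaussianPDFReal m v x := by
    rw [cdf_eq_real, measureReal_def, gaussianReal_apply_eq_integral m hv,
      ENNReal.toReal_ofReal (integral_nonneg (gaussianPDFReal_nonneg m v))]
  have hint := integrable_gaussianPDFReal m v
  rw [hcdf, hcdf, intervalIntegral.integral_Iic_sub_Iic hint.integrableOn hint.integrableOn]

lemma gaussianPDFReal_zero_one : gaussianPDFReal 0 1 = stdNormalPDF := by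
  ext x
  simp only [gaussianPDFReal, stdNormalPDF, NNReal.coe_one, mul_one, sub_zero, inv_mul_eq_div]

lemma stdNormalPDF_pos (x : ℝ) : 0 < stdNormalPDF x := by
  unfold stdNormalPDF
  positivity

lemma continuous_stdNormalPDF : Continuous stdNormalPDF := by
  unfold stdNormalPDF
  fun_prop

lemma stdNormalPDF_add (u t : ℝ) :
    stdNormalPDF (u + t) = stdNormalPDF t * (Real.exp (-(t * u)) * Real.exp (-u ^ 2 / 2)) := by
  rw [stdNormalPDF, stdNormalPDF, div_mul_eq_mul_div, ← Real.exp_add, ← Real.exp_add]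
  ring_nf

lemma one_le_sqrt_two_mul_pi : 1 ≤ Real.sqrt (2 * Real.pi) :=
  Real.one_le_sqrt.mpr (by linarith [Real.pi_gt_three])

lemma abs_stdNormalPDF_sub_le (x : ℝ) :
    |stdNormalPDF x - 1 / Real.sqrt (2 * Real.pi)| ≤ x ^ 2 / 2 := by
  rw [stdNormalPDF, ← sub_div, abs_div, abs_of_nonneg (Real.sqrt_nonneg _), neg_div]
  exact (div_le_self (abs_nonneg _) one_le_sqrt_two_mul_pi).trans
    (abs_exp_neg_sub_one_le (by positivity))

lemma abs_cdf_gaussianReal_sub_le (v : ℝ) :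
    |cdf (gaussianReal 0 1) v - (1 / 2 + v / Real.sqrt (2 * Real.pi))| ≤ |v| ^ 3 / 2 := by
  have : NullSingletonClass (gaussianReal 0 1) := nullSingletonClass_gaussianReal one_ne_zero
  have hremainder : cdf (gaussianReal 0 1) v - (1 / 2 + v / Real.sqrt (2 * Real.pi)) =
      ∫ x in (0 : ℝ)..v, (stdNormalPDF x - 1 / Real.sqrt (2 * Real.pi)) := by
    rw [intervalIntegral.integral_sub (continuous_stdNormalPDF.intervalIntegrable _ _)
      intervalIntegrable_const, ← gaussianPDFReal_zero_one,
      ← cdf_gaussianReal_sub_cdf_gaussianReal 0 one_ne_zero, cdf_zero_eq_half,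
      intervalIntegral.integral_const, smul_eq_mul]
    ring
  have hbound (x : ℝ) (hx : x ∈ uIoc 0 v) :
      ‖stdNormalPDF x - 1 / Real.sqrt (2 * Real.pi)‖ ≤ v ^ 2 / 2 := by
    have hxv : |x| ≤ |v| := by simpa using abs_sub_left_of_mem_uIcc (uIoc_subset_uIcc hx)
    exact (abs_stdNormalPDF_sub_le x).trans (by gcongr ?_ / 2; exact sq_le_sq.mpr hxv)
  rw [hremainder, ← Real.norm_eq_abs]
  refine (intervalIntegral.norm_integral_le_of_norm_le_const hbound).trans_eq ?_
  rw [sub_zero, ← sq_abs v]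
  ring

lemma abs_exp_mul_cdf_gaussianReal_sub_le (k u : ℝ) :
    |Real.exp (-u ^ 2 / 2) * cdf (gaussianReal 0 1) (k * u) -
        (1 / 2 + k / Real.sqrt (2 * Real.pi) * u - 1 / 4 * u ^ 2)| ≤
      (1 + |k| + |k| ^ 3) / 2 * |u| ^ 3 := by
  set e := Real.exp (-u ^ 2 / 2)
  set r := cdf (gaussianReal 0 1) (k * u) - (1 / 2 + k * u / Real.sqrt (2 * Real.pi)) with hr
  have he_nonneg : 0 ≤ e := Real.exp_nonneg _
  have he_le_one : e ≤ 1 := Real.exp_le_one_iff.mpr (by linarith [sq_nonneg u])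
  have hconst : |(e - 1 + u ^ 2 / 2) * (1 / 2)| ≤ |u| ^ 3 / 2 := by
    rw [abs_mul, abs_of_pos (one_half_pos (α := ℝ))]
    linarith [abs_exp_neg_sq_half_sub_le u, pow_nonneg (abs_nonneg u) 3]
  have hlinear : |(e - 1) * (k * u / Real.sqrt (2 * Real.pi))| ≤ |k| / 2 * |u| ^ 3 := by
    have he : |e - 1| ≤ |u| ^ 2 / 2 := by
      simpa [e, neg_div] using abs_exp_neg_sub_one_le (w := u ^ 2 / 2) (by positivity)
    have hk : |k * u / Real.sqrt (2 * Real.pi)| ≤ |k| * |u| := by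
      rw [abs_div, abs_mul, abs_of_nonneg (Real.sqrt_nonneg _)]
      exact div_le_self (by positivity) one_le_sqrt_two_mul_pi
    calc |(e - 1) * (k * u / Real.sqrt (2 * Real.pi))|
        ≤ |u| ^ 2 / 2 * (|k| * |u|) := by rw [abs_mul]; gcongr
      _ = |k| / 2 * |u| ^ 3 := by ring
  have hremainder : |e * r| ≤ |k| ^ 3 / 2 * |u| ^ 3 := by
    calc |e * r| ≤ 1 * (|k * u| ^ 3 / 2) := by
          rw [abs_mul, abs_of_nonneg he_nonneg]
          gcongr
          exact abs_cdf_gaussianReal_sub_le _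
      _ = |k| ^ 3 / 2 * |u| ^ 3 := by rw [abs_mul]; ring
  calc _
      = |(e - 1 + u ^ 2 / 2) * (1 / 2) + (e - 1) * (k * u / Real.sqrt (2 * Real.pi)) + e * r| := by
        congr 1; rw [hr]; ring
    _ ≤ |u| ^ 3 / 2 + |k| / 2 * |u| ^ 3 + |k| ^ 3 / 2 * |u| ^ 3 :=
        (abs_add_three _ _ _).trans (by gcongr)
    _ = (1 + |k| + |k| ^ 3) / 2 * |u| ^ 3 := by ring

lemma setIntegral_Ici_gaussianReal {E : Type*} [NormedAddCommGroup E] [NormedSpace ℝ E]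
    (f : ℝ → E) (t : ℝ) :
    ∫ x in Ici t, f x ∂gaussianReal 0 1 = stdNormalPDF t •
      ∫ u in Ioi (0 : ℝ), Real.exp (-(t * u)) • Real.exp (-u ^ 2 / 2) • f (u + t) := by
  have hshift := (measurePreserving_add_right volume t).setIntegral_preimage_emb
    (measurableEmbedding_addRight t) (fun x ↦ stdNormalPDF x • f x) (Ici t)
  rw [preimage_add_const_Ici, sub_self, integral_Ici_eq_integral_Ioi] at hshift
  simp_rw [stdNormalPDF_add, mul_smul] at hshift
  rw [integral_smul] at hshift
  rw [hshift, ← integral_indicator measurableSet_Ici,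
    integral_gaussianReal_eq_integral_smul one_ne_zero, gaussianPDFReal_zero_one,
    ← integral_indicator measurableSet_Ici]
  simp_rw [indicator_smul_apply]

lemma abs_laplace_exp_mul_cdf_gaussianReal_sub_le (k : ℝ) {t : ℝ} (ht : 0 < t) :
    |(∫ u in Ioi (0 : ℝ), Real.exp (-(t * u)) *
        (Real.exp (-u ^ 2 / 2) * cdf (gaussianReal 0 1) (k * u))) -
        (1 / (2 * t) + k / (Real.sqrt (2 * Real.pi) * t ^ 2) - 1 / (2 * t ^ 3))| ≤
      3 * (1 + |k| + |k| ^ 3) / t ^ 4 := by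
  have hmeas : Measurable fun u ↦
      Real.exp (-u ^ 2 / 2) * cdf (gaussianReal 0 1) (k * u) := by
    have := (monotone_cdf (gaussianReal 0 1)).measurable
    fun_prop
  let a : Fin 3 → ℝ := ![1 / 2, k / Real.sqrt (2 * Real.pi), -1 / 4]
  have hpoly (u : ℝ) : ∑ i : Fin 3, u ^ (i : ℕ) • a i =
      1 / 2 + k / Real.sqrt (2 * Real.pi) * u - 1 / 4 * u ^ 2 := by
    simp only [a, Fin.sum_univ_three, Matrix.cons_val, Fin.val_zero, Fin.val_one, Fin.val_two,
      smul_eq_mul]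
    ring
  have hmoments : ∑ i : Fin 3, ((i : ℕ)! / t ^ ((i : ℕ) + 1)) • a i =
      1 / (2 * t) + k / (Real.sqrt (2 * Real.pi) * t ^ 2) - 1 / (2 * t ^ 3) := by
    simp only [a, Fin.sum_univ_three, Matrix.cons_val, Fin.val_zero, Fin.val_one, Fin.val_two,
      smul_eq_mul, Nat.factorial_zero, Nat.factorial_one, Nat.factorial_two]
    push_cast
    ring
  have hremainder : ∀ u > 0, ‖Real.exp (-u ^ 2 / 2) * cdf (gaussianReal 0 1) (k * u) -
      ∑ i : Fin 3, u ^ (i : ℕ) • a i‖ ≤ (1 + |k| + |k| ^ 3) / 2 * u ^ 3 := fun u hu ↦ by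
    simpa only [hpoly, Real.norm_eq_abs, abs_of_pos hu] using
      abs_exp_mul_cdf_gaussianReal_sub_le k u
  rw [← hmoments, ← Real.norm_eq_abs]
  refine (norm_laplace_sub_sum_le_of_norm_sub_sum_le ht hmeas.aestronglyMeasurable
    hremainder).trans_eq ?_
  norm_num [Nat.factorial]
  ring

end Gaussian

section Tail

variable {Ω : Type*} [MeasurableSpace Ω] {μ : Measure Ω} {W₁ W₂ : Ω → ℝ} (ρ : ℝ) {σ : ℝ}

lemma measureReal_gaussian_tail_eq_laplace (hσ : 0 < σ)
    (hW₁ : HasLaw W₁ (gaussianReal 0 1) μ) (hW₂ : HasLaw W₂ (gaussianReal 0 1) μ)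
    (hindep : IndepFun W₁ W₂ μ) (t : ℝ) :
    μ.real {ω | t ≤ W₁ ω ∧ ρ * t ≤ ρ * W₁ ω + σ * W₂ ω} =
      stdNormalPDF t * ∫ u in Ioi (0 : ℝ), Real.exp (-(t * u)) *
        (Real.exp (-u ^ 2 / 2) * cdf (gaussianReal 0 1) (ρ / σ * u)) := by
  have hevent (x y : ℝ) : ρ * t ≤ ρ * x + σ * y ↔ 0 ≤ ρ / σ * (x - t) + y := by
    have hscale : σ * (ρ / σ * (x - t) + y) = ρ * x + σ * y - ρ * t := by
      field_simp
      ring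
    rw [← mul_nonneg_iff_of_pos_left hσ, hscale, sub_nonneg]
  simp_rw [hevent]
  have hcond := measureReal_mem_and_nonneg_add_eq_setIntegral_cdf (gaussianReal 0 1) hW₁ hW₂ hindep
    (measurableSet_Ici (a := t)) (h := fun x ↦ ρ / σ * (x - t)) (by fun_prop)
  simpa only [mem_Ici, setIntegral_Ici_gaussianReal, add_sub_cancel_right, smul_eq_mul] using hcond

theorem stmt9_general (hσ : 0 < σ)
    (hW₁ : HasLaw W₁ (gaussianReal 0 1) μ) (hW₂ : HasLaw W₂ (gaussianReal 0 1) μ)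
    (hindep : IndepFun W₁ W₂ μ) {t : ℝ} (ht : 0 < t) :
    |(μ {ω | t ≤ W₁ ω ∧ ρ * t ≤ ρ * W₁ ω + σ * W₂ ω}).toReal -
        stdNormalPDF t * (1 / (2 * t) + (ρ / σ) / (Real.sqrt (2 * Real.pi) * t ^ 2) -
          1 / (2 * t ^ 3))| ≤
      3 * (1 + |ρ / σ| + |ρ / σ| ^ 3) * stdNormalPDF t / t ^ 4 := by
  rw [← measureReal_def, measureReal_gaussian_tail_eq_laplace ρ hσ hW₁ hW₂ hindep, ← mul_sub,
    abs_mul, abs_of_pos (stdNormalPDF_pos t), mul_comm _ (stdNormalPDF t), mul_div_assoc]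
  exact mul_le_mul_of_nonneg_left (abs_laplace_exp_mul_cdf_gaussianReal_sub_le (ρ / σ) ht)
    (stdNormalPDF_pos t).le

end Tail

/-- Bivariate normal upper-tail expansion: for `Z₁ = W₁`, `Z₂ = ρW₁ + √(1−ρ²)W₂` with `W₁, W₂`
independent standard normals and `k = ρ/√(1−ρ²)`, there exist `C > 0` and `t₀ > 0` such that for
all `t ≥ t₀`,
`|P(Z₁ ≥ t, Z₂ ≥ ρt) − φ(t)(1/(2t) + k/(√(2π)t²) − 1/(2t³))| ≤ C φ(t)/t⁴`. -/
theorem stmt9 {Ω : Type*} [MeasurableSpace Ω] (μ : Measure Ω) [IsProbabilityMeasure μ]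
    (ρ : ℝ) (hρ0 : 0 < ρ) (hρ1 : ρ < 1)
    (W₁ W₂ : Ω → ℝ) (hW₁ : Measurable W₁) (hW₂ : Measurable W₂)
    (hlaw₁ : μ.map W₁ = gaussianReal 0 1) (hlaw₂ : μ.map W₂ = gaussianReal 0 1)
    (hindep : IndepFun W₁ W₂ μ) :
    ∃ C > (0 : ℝ), ∃ t₀ > (0 : ℝ), ∀ t ≥ t₀,
      |(μ {ω | t ≤ W₁ ω ∧ ρ * t ≤ ρ * W₁ ω + Real.sqrt (1 - ρ ^ 2) * W₂ ω}).toReal -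
          stdNormalPDF t * (1 / (2 * t) +
            (ρ / Real.sqrt (1 - ρ ^ 2)) / (Real.sqrt (2 * Real.pi) * t ^ 2) -
            1 / (2 * t ^ 3))| ≤
        C * stdNormalPDF t / t ^ 4 := by
  have hσ : 0 < Real.sqrt (1 - ρ ^ 2) := Real.sqrt_pos.mpr (by nlinarith)
  exact ⟨3 * (1 + |ρ / Real.sqrt (1 - ρ ^ 2)| + |ρ / Real.sqrt (1 - ρ ^ 2)| ^ 3), by positivity, 1,
    one_pos, fun t ht ↦ stmt9_general ρ hσ ⟨hW₁.aemeasurable, hlaw₁⟩ ⟨hW₂.aemeasurable, hlaw₂⟩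
      hindep (one_pos.trans_le ht)⟩
end

section
/- Let ρ ∈ (0, 1) and set k = ρ/√(1 − ρ²). Let W₁, W₂ be independent standard normal random variables and put Z₁ = W₁ and Z₂ = ρW₁ + √(1 − ρ²)·W₂. Then there exist constants C > 0 and t₀ > 0 such that for all t ≥ t₀: | E[ Z₁ · 1{Z₁ ≥ t and Z₂ ≥ ρt} ] − φ(t)·( 1/2 + k/(√(2π) t) ) | ≤ C·φ(t)/t³. -/
open MeasureTheory ProbabilityTheory

/- Given `W₁ = x`, the event `ρt ≤ Z₂` is `k(t - x) ≤ W₂`, of probability `Q(x)` with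
`Q(t) = 1/2` and `Q'(x) = kφ(k(t - x))`. Since `xφ(x) = -φ'(x)`, integrating `Q(x)xφ(x)` by parts
over `(t, ∞)` gives the boundary term `φ(t)/2` and the remainder `k∫φ(k(t - x))φ(x)dx`.
Shifting `x = t + u` pulls `φ(t)/√(2π)` out of the remainder and leaves the Laplace integral of
`exp(-(1 + k²)u²/2)`, whose distance to `1/t` is controlled by `|exp(-y) - 1| ≤ y`. -/

open Set Filter
open scoped Topology NNReal Nat

section Laplace

variable {s : ℝ}

lemma integral_pow_mul_exp_neg_mul_Ioi (n : ℕ) (hs : 0 < s) :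
    ∫ u in Ioi (0 : ℝ), u ^ n * Real.exp (-(s * u)) = n ! / s ^ (n + 1) := by
  have h := Real.integral_rpow_mul_exp_neg_mul_Ioi (a := (n : ℝ) + 1) (by positivity) hs
  rw [Real.Gamma_nat_eq_factorial, ← Nat.cast_add_one, Real.rpow_natCast] at h
  simp only [Nat.cast_add_one, add_sub_cancel_right, Real.rpow_natCast] at h
  rw [h, one_div_pow, one_div_mul_eq_div]

lemma integrableOn_pow_mul_exp_neg_mul_Ioi (n : ℕ) (hs : 0 < s) :
    IntegrableOn (fun u : ℝ ↦ u ^ n * Real.exp (-(s * u))) (Ioi 0) :=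
  .of_integral_ne_zero (by rw [integral_pow_mul_exp_neg_mul_Ioi n hs]; positivity)

lemma abs_integral_exp_neg_mul_mul_sub_le {f : ℝ → ℝ} {c K : ℝ} {n : ℕ} (hs : 0 < s)
    (hf : AEStronglyMeasurable f (volume.restrict (Ioi 0)))
    (hfc : ∀ u > 0, |f u - c| ≤ K * u ^ n) :
    |(∫ u in Ioi (0 : ℝ), Real.exp (-(s * u)) * f u) - c / s| ≤ K * (n ! / s ^ (n + 1)) := by
  have hdom : IntegrableOn (fun u ↦ K * (u ^ n * Real.exp (-(s * u)))) (Ioi 0) :=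
    (integrableOn_pow_mul_exp_neg_mul_Ioi n hs).const_mul K
  have hle : ∀ᵐ u ∂volume.restrict (Ioi 0),
      ‖Real.exp (-(s * u)) * (f u - c)‖ ≤ K * (u ^ n * Real.exp (-(s * u))) := by
    filter_upwards [ae_restrict_mem measurableSet_Ioi] with u hu
    rw [norm_mul, Real.norm_of_nonneg (Real.exp_nonneg _), Real.norm_eq_abs, mul_comm, ← mul_assoc]
    exact mul_le_mul_of_nonneg_right (hfc u hu) (Real.exp_nonneg _)
  have hdiff : IntegrableOn (fun u ↦ Real.exp (-(s * u)) * (f u - c)) (Ioi 0) :=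
    hdom.mono' (by fun_prop) hle
  have hexp : IntegrableOn (fun u ↦ Real.exp (-(s * u)) * c) (Ioi 0) := by
    have := (integrableOn_pow_mul_exp_neg_mul_Ioi 0 hs).mul_const c
    simpa only [pow_zero, one_mul, IntegrableOn] using this
  have hexp_eq : ∫ u in Ioi (0 : ℝ), Real.exp (-(s * u)) * c = c / s := by
    have := integral_pow_mul_exp_neg_mul_Ioi 0 hs
    simp only [pow_zero, one_mul, Nat.factorial_zero, Nat.cast_one, zero_add, pow_one] at this
    rw [integral_mul_const, this, one_div_mul_eq_div]
  calc |(∫ u in Ioi (0 : ℝ), Real.exp (-(s * u)) * f u) - c / s|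
    _ = ‖∫ u in Ioi (0 : ℝ), Real.exp (-(s * u)) * (f u - c)‖ := by
      rw [← hexp_eq, Real.norm_eq_abs, sub_eq_iff_eq_add.2 ?_]
      rw [← integral_add hdiff hexp]
      simp only [mul_sub, sub_add_cancel]
    _ ≤ ∫ u in Ioi (0 : ℝ), K * (u ^ n * Real.exp (-(s * u))) :=
      norm_integral_le_of_norm_le hdom hle
    _ = K * (n ! / s ^ (n + 1)) := by
      rw [integral_const_mul, integral_pow_mul_exp_neg_mul_Ioi n hs]

lemma abs_exp_neg_sub_one_le_s10 {x : ℝ} (hx : 0 ≤ x) : |Real.exp (-x) - 1| ≤ x := by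
  rw [abs_sub_comm, abs_of_nonneg (sub_nonneg.2 (Real.exp_le_one_iff.2 (neg_nonpos.2 hx)))]
  linarith [Real.one_sub_le_exp_neg x]

lemma abs_integral_exp_neg_mul_mul_exp_neg_mul_sq_sub_le {a : ℝ} (hs : 0 < s) (ha : 0 ≤ a) :
    |(∫ u in Ioi (0 : ℝ), Real.exp (-(s * u)) * Real.exp (-(a * u ^ 2))) - 1 / s|
      ≤ 2 * a / s ^ 3 := by
  have h := abs_integral_exp_neg_mul_mul_sub_le (n := 2) hs
    (f := fun u ↦ Real.exp (-(a * u ^ 2))) (by fun_prop)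
    fun u _ ↦ abs_exp_neg_sub_one_le_s10 (mul_nonneg ha (sq_nonneg u))
  rwa [Nat.factorial_two, Nat.cast_two, mul_div_left_comm, mul_div_assoc'] at h

end Laplace

section Tail

lemma hasDerivAt_integral_Ioi {E : Type*} [NormedAddCommGroup E] [NormedSpace ℝ E]
    [CompleteSpace E] {f : ℝ → E} {a : ℝ} (hf : Integrable f) (hfa : ContinuousAt f a) :
    HasDerivAt (fun b ↦ ∫ x in Ioi b, f x) (-f a) a := by
  have hsplit : (fun b ↦ ∫ x in Ioi b, f x) =
      fun b ↦ (∫ x in Ioi a, f x) - ∫ x in a..b, f x := by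
    ext b
    rw [← intervalIntegral.integral_Ioi_sub_Ioi' hf.integrableOn hf.integrableOn, sub_sub_cancel]
  rw [hsplit]
  exact (intervalIntegral.integral_hasDerivAt_right hf.intervalIntegrable
    hf.aestronglyMeasurable.stronglyMeasurableAtFilter hfa).const_sub _

lemma setIntegral_Ioi_eq_setIntegral_Ioi_zero_add {E : Type*} [NormedAddCommGroup E]
    [NormedSpace ℝ E] (f : ℝ → E) (a : ℝ) :
    ∫ x in Ioi a, f x = ∫ u in Ioi 0, f (a + u) := by
  have h := (measurePreserving_add_left volume a).setIntegral_preimage_emb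
    (measurableEmbedding_addLeft a) f (Ioi a)
  rwa [preimage_const_add_Ioi, sub_self, eq_comm] at h

end Tail

section Gaussian

variable (m : ℝ) (v : ℝ≥0)

lemma hasDerivAt_gaussianPDFReal (x : ℝ) :
    HasDerivAt (gaussianPDFReal m v) (-((x - m) / v) * gaussianPDFReal m v x) x := by
  rw [gaussianPDFReal_def]
  refine (((((hasDerivAt_id x).sub_const m).pow 2).neg.div_const (2 * v : ℝ)).exp.const_mul
    (√(2 * Real.pi * v))⁻¹).congr_deriv ?_
  simp only [id_eq, Nat.cast_ofNat, Pi.neg_apply, Pi.pow_apply]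
  ring

lemma continuous_gaussianPDFReal : Continuous (gaussianPDFReal m v) :=
  continuous_iff_continuousAt.2 fun x ↦ (hasDerivAt_gaussianPDFReal m v x).continuousAt

lemma tendsto_gaussianPDFReal_atTop : Tendsto (gaussianPDFReal m v) atTop (𝓝 0) := by
  obtain rfl | hv := eq_or_ne v 0
  · rw [gaussianPDFReal_zero_var]; exact tendsto_const_nhds
  have hsq : Tendsto (fun x ↦ (x - m) ^ 2 / (2 * v : ℝ)) atTop atTop :=
    ((tendsto_pow_atTop two_ne_zero).comp (tendsto_atTop_add_const_right _ (-m) tendsto_id)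
      ).atTop_div_const (by positivity)
  have hexp := (Real.tendsto_exp_neg_atTop_nhds_zero.comp hsq).const_mul (√(2 * Real.pi * v))⁻¹
  rw [mul_zero] at hexp
  simpa only [gaussianPDFReal_def, Function.comp_def, neg_div] using hexp

lemma gaussianPDFReal_le_mean (x : ℝ) : gaussianPDFReal m v x ≤ gaussianPDFReal m v m := by
  simp only [gaussianPDFReal_def]
  gcongr ?_ * Real.exp (?_ / _)
  rw [sub_self]
  nlinarith [sq_nonneg (x - m)]

lemma integrable_gaussianPDFReal_comp_mul {f g : ℝ → ℝ} (hf : Measurable f) (hg : Integrable g) :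
    Integrable (fun x ↦ gaussianPDFReal m v (f x) * g x) := by
  refine hg.bdd_mul (c := gaussianPDFReal m v m)
    ((measurable_gaussianPDFReal m v).comp hf).aestronglyMeasurable (.of_forall fun x ↦ ?_)
  rw [Real.norm_of_nonneg (gaussianPDFReal_nonneg m v _)]
  exact gaussianPDFReal_le_mean m v _

lemma integrable_sub_mul_gaussianPDFReal :
    Integrable (fun x ↦ (x - m) * gaussianPDFReal m v x) := by
  obtain rfl | hv := eq_or_ne v 0
  · simp only [gaussianPDFReal_zero_var, Pi.zero_apply, mul_zero]
    exact integrable_zero _ _ _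
  have h := ((integrable_mul_exp_neg_mul_sq (b := (2 * v : ℝ)⁻¹) (by positivity)).comp_sub_right
    m).const_mul (√(2 * Real.pi * v))⁻¹
  refine h.congr (.of_forall fun x ↦ ?_)
  simp only [gaussianPDFReal_def]
  rw [mul_left_comm, neg_div, div_eq_inv_mul, neg_mul]

variable {m v}

lemma setIntegral_gaussianReal_eq_setIntegral_smul {E : Type*} [NormedAddCommGroup E]
    [NormedSpace ℝ E] (hv : v ≠ 0) {A : Set ℝ} (hA : MeasurableSet A) (f : ℝ → E) :
    ∫ x in A, f x ∂gaussianReal m v = ∫ x in A, gaussianPDFReal m v x • f x := by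
  rw [← integral_indicator hA, integral_gaussianReal_eq_integral_smul hv, ← integral_indicator hA]
  simp only [indicator_smul]

lemma gaussianReal_real_Ici (hv : v ≠ 0) (x : ℝ) :
    (gaussianReal m v).real (Ici x) = ∫ y in Ioi x, gaussianPDFReal m v y := by
  rw [measureReal_def, gaussianReal_apply_eq_integral m hv, integral_Ici_eq_integral_Ioi,
    ENNReal.toReal_ofReal (integral_nonneg (gaussianPDFReal_nonneg m v))]

lemma hasDerivAt_gaussianReal_real_Ici (hv : v ≠ 0) (x : ℝ) :
    HasDerivAt (fun a ↦ (gaussianReal m v).real (Ici a)) (-gaussianPDFReal m v x) x := by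
  simp only [gaussianReal_real_Ici hv]
  exact hasDerivAt_integral_Ioi (integrable_gaussianPDFReal m v)
    (continuous_gaussianPDFReal m v).continuousAt

lemma gaussianReal_real_Ici_mean (hv : v ≠ 0) : (gaussianReal m v).real (Ici m) = 1 / 2 := by
  have := nullSingletonClass_gaussianReal (μ := m) hv
  have hreflect : (gaussianReal m v).real (Iic m) = (gaussianReal m v).real (Ici m) := by
    have h := gaussianReal_map_const_sub (μ := m) (v := v) (2 * m)
    rw [two_mul, add_sub_cancel_right] at h
    conv_lhs => rw [← h, map_measureReal_apply (by fun_prop) measurableSet_Iic]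
    rw [preimage_const_sub_Iic, add_sub_cancel_right]
  have htotal := probReal_add_probReal_compl (μ := gaussianReal m v) (measurableSet_Iic (a := m))
  rw [compl_Iic, measureReal_congr Ioi_ae_eq_Ici, hreflect] at htotal
  linarith

lemma hasDerivAt_gaussianReal_real_Ici_mul_sub (hv : v ≠ 0) (k t x : ℝ) :
    HasDerivAt (fun x ↦ (gaussianReal m v).real (Ici (k * (t - x))))
      (k * gaussianPDFReal m v (k * (t - x))) x := by
  refine ((hasDerivAt_gaussianReal_real_Ici hv _).comp x
    (((hasDerivAt_id x).const_sub t).const_mul k)).congr_deriv ?_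
  rw [id_eq, mul_neg_one, neg_mul_neg, mul_comm]

lemma setIntegral_Ioi_mul_sub_mul_gaussianPDFReal {g g' : ℝ → ℝ} {a : ℝ}
    (hg : ∀ x ∈ Ici a, HasDerivAt g (g' x) x)
    (hint : IntegrableOn (fun x ↦ g x * ((x - m) * gaussianPDFReal m v x)) (Ioi a))
    (hint' : IntegrableOn (fun x ↦ g' x * gaussianPDFReal m v x) (Ioi a))
    (hlim : Tendsto (fun x ↦ g x * gaussianPDFReal m v x) atTop (𝓝 0)) :
    ∫ x in Ioi a, g x * ((x - m) * gaussianPDFReal m v x) =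
      v * (g a * gaussianPDFReal m v a + ∫ x in Ioi a, g' x * gaussianPDFReal m v x) := by
  have hpdf (x : ℝ) : HasDerivAt (fun y ↦ -(v * gaussianPDFReal m v y))
      ((x - m) * gaussianPDFReal m v x) x := by
    refine ((hasDerivAt_gaussianPDFReal m v x).const_mul (v : ℝ)).neg.congr_deriv ?_
    obtain rfl | hv := eq_or_ne v 0
    · simp only [gaussianPDFReal_zero_var, Pi.zero_apply, mul_zero, neg_zero]
    · field_simp
  have hprod (f : ℝ → ℝ) : f * (fun y ↦ -(v * gaussianPDFReal m v y)) =
      fun x ↦ -(v : ℝ) * (f x * gaussianPDFReal m v x) := by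
    ext x; simp only [Pi.mul_apply]; ring
  have ha : Tendsto (g * fun y ↦ -(v * gaussianPDFReal m v y)) (𝓝[>] a)
      (𝓝 (-v * (g a * gaussianPDFReal m v a))) := by
    rw [hprod]
    exact (((hg a self_mem_Ici).continuousAt.mul
      (continuous_gaussianPDFReal m v).continuousAt).tendsto.const_mul _).mono_left
        nhdsWithin_le_nhds
  have htop : Tendsto (g * fun y ↦ -(v * gaussianPDFReal m v y)) atTop (𝓝 0) := by
    rw [hprod]
    simpa only [mul_zero] using hlim.const_mul (-v : ℝ)
  have hint'' : IntegrableOn (g' * fun y ↦ -(v * gaussianPDFReal m v y)) (Ioi a) := by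
    rw [hprod]
    exact hint'.const_mul _
  rw [integral_Ioi_mul_deriv_eq_deriv_mul (fun x hx ↦ hg x (Ioi_subset_Ici_self hx))
    (fun x _ ↦ hpdf x) hint hint'' ha htop]
  simp only [mul_neg, integral_neg, mul_left_comm _ (v : ℝ), integral_const_mul]
  ring

end Gaussian

section Independence

variable {Ω 𝓧 𝓨 E : Type*} {mΩ : MeasurableSpace Ω} {m𝓧 : MeasurableSpace 𝓧}
  {m𝓨 : MeasurableSpace 𝓨} [NormedAddCommGroup E] [NormedSpace ℝ E] [CompleteSpace E]
  {P : Measure Ω} {ν : Measure 𝓧} {ξ : Measure 𝓨} {X : Ω → 𝓧} {Y : Ω → 𝓨}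

lemma setIntegral_comp_fst_of_indepFun [IsFiniteMeasure ν] (hX : HasLaw X ν P) (hY : HasLaw Y ξ P)
    (hXY : IndepFun X Y P) {f : 𝓧 → E} (hf : Integrable f ν) {A : Set 𝓧} (hA : MeasurableSet A)
    {S : Set (𝓧 × 𝓨)} (hS : MeasurableSet S) :
    ∫ ω in {ω | X ω ∈ A ∧ (X ω, Y ω) ∈ S}, f (X ω) ∂P =
      ∫ x in A, ξ.real (Prod.mk x ⁻¹' S) • f x ∂ν := by
  have : IsFiniteMeasure P := hX.isFiniteMeasure
  have : IsFiniteMeasure ξ := hY.isFiniteMeasure_iff.1 ‹_›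
  have hpair := hXY.hasLaw_prod hX hY
  have hfst : Integrable (fun p : 𝓧 × 𝓨 ↦ f p.1) ((ν.restrict A).prod ξ) :=
    hf.restrict.comp_fst ξ
  calc ∫ ω in {ω | X ω ∈ A ∧ (X ω, Y ω) ∈ S}, f (X ω) ∂P
    _ = ∫ p in A ×ˢ univ ∩ S, f p.1 ∂ν.prod ξ := by
      rw [← hpair.map_eq, setIntegral_map ((hA.prod .univ).inter hS)
        (by rw [hpair.map_eq]; exact (hf.comp_fst ξ).1) hpair.aemeasurable]
      simp only [preimage_inter, mk_preimage_prod, preimage_univ, inter_univ]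
      rfl
    _ = ∫ p, S.indicator (fun p ↦ f p.1) p ∂(ν.restrict A).prod ξ := by
      rw [integral_indicator hS, inter_comm, ← Measure.restrict_restrict hS,
        ← Measure.prod_restrict, Measure.restrict_univ]
    _ = ∫ x in A, ∫ y, (Prod.mk x ⁻¹' S).indicator (fun _ ↦ f x) y ∂ξ ∂ν :=
      integral_prod _ (hfst.indicator hS)
    _ = ∫ x in A, ξ.real (Prod.mk x ⁻¹' S) • f x ∂ν := by
      simp only [integral_indicator_const _ (measurable_prodMk_left hS)]

end Independence

section StandardNormal

lemma gaussianPDFReal_zero_one_apply (x : ℝ) : gaussianPDFReal 0 1 x = stdNormalPDF x := by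
  simp only [gaussianPDFReal_def, stdNormalPDF, NNReal.coe_one, mul_one, sub_zero,
    div_eq_inv_mul]

lemma stdNormalPDF_mul_stdNormalPDF (k t u : ℝ) :
    stdNormalPDF (-(k * u)) * stdNormalPDF (t + u) = stdNormalPDF t / √(2 * Real.pi) *
      (Real.exp (-(t * u)) * Real.exp (-((1 + k ^ 2) / 2 * u ^ 2))) := by
  have hexp : Real.exp (-(-(k * u)) ^ 2 / 2) * Real.exp (-(t + u) ^ 2 / 2) =
      Real.exp (-t ^ 2 / 2) *
        (Real.exp (-(t * u)) * Real.exp (-((1 + k ^ 2) / 2 * u ^ 2))) := by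
    simp only [← Real.exp_add]
    ring_nf
  rw [stdNormalPDF, stdNormalPDF, stdNormalPDF, div_mul_div_comm, hexp]
  ring

lemma setIntegral_gaussianReal_real_Ici_smul (k t : ℝ) :
    ∫ x in Ici t, (gaussianReal 0 1).real (Ici (k * (t - x))) • x ∂gaussianReal 0 1 =
      stdNormalPDF t * (1 / 2) +
        k * ∫ x in Ioi t, stdNormalPDF (k * (t - x)) * stdNormalPDF x := by
  set Q : ℝ → ℝ := fun x ↦ (gaussianReal 0 1).real (Ici (k * (t - x))) with hQ_def
  have hQ (x : ℝ) : HasDerivAt Q (k * gaussianPDFReal 0 1 (k * (t - x))) x :=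
    hasDerivAt_gaussianReal_real_Ici_mul_sub one_ne_zero k t x
  have hQ_cont : Continuous Q := continuous_iff_continuousAt.2 fun x ↦ (hQ x).continuousAt
  have hQ_le (x : ℝ) : ‖Q x‖ ≤ 1 := by
    rw [Real.norm_of_nonneg measureReal_nonneg]
    exact measureReal_le_one
  have hQ_t : Q t = 1 / 2 := by
    simp only [hQ_def, sub_self, mul_zero, gaussianReal_real_Ici_mean one_ne_zero]
  have hint : Integrable (fun x ↦ Q x * ((x - 0) * gaussianPDFReal 0 1 x)) :=
    (integrable_sub_mul_gaussianPDFReal 0 1).bdd_mul hQ_cont.aestronglyMeasurable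
      (.of_forall hQ_le)
  have hint' : Integrable
      (fun x ↦ k * gaussianPDFReal 0 1 (k * (t - x)) * gaussianPDFReal 0 1 x) := by
    simp only [mul_assoc]
    exact (integrable_gaussianPDFReal_comp_mul 0 1 (by fun_prop)
      (integrable_gaussianPDFReal 0 1)).const_mul k
  have hlim : Tendsto (fun x ↦ Q x * gaussianPDFReal 0 1 x) atTop (𝓝 0) :=
    isBoundedUnder_le_mul_tendsto_zero (isBoundedUnder_of ⟨1, hQ_le⟩)
      (tendsto_gaussianPDFReal_atTop 0 1)
  have hparts := setIntegral_Ioi_mul_sub_mul_gaussianPDFReal (a := t) (fun x _ ↦ hQ x)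
    hint.integrableOn hint'.integrableOn hlim
  simp only [hQ_t, sub_zero, NNReal.coe_one, one_mul, mul_assoc, integral_const_mul,
    gaussianPDFReal_zero_one_apply] at hparts
  rw [setIntegral_gaussianReal_eq_setIntegral_smul one_ne_zero measurableSet_Ici,
    integral_Ici_eq_integral_Ioi, mul_comm (stdNormalPDF t), ← hparts]
  simp only [gaussianPDFReal_zero_one_apply, smul_eq_mul, mul_comm (stdNormalPDF _), mul_assoc]
  rfl

lemma setIntegral_Ioi_stdNormalPDF_mul_stdNormalPDF (k t : ℝ) :
    ∫ x in Ioi t, stdNormalPDF (k * (t - x)) * stdNormalPDF x =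
      stdNormalPDF t / √(2 * Real.pi) *
        ∫ u in Ioi 0, Real.exp (-(t * u)) * Real.exp (-((1 + k ^ 2) / 2 * u ^ 2)) := by
  rw [setIntegral_Ioi_eq_setIntegral_Ioi_zero_add, ← integral_const_mul]
  simp only [sub_add_cancel_left, mul_neg, stdNormalPDF_mul_stdNormalPDF]

variable {Ω : Type*} [MeasurableSpace Ω] {μ : Measure Ω} {W₁ W₂ : Ω → ℝ}

lemma setIntegral_wedge_eq (hW₁ : HasLaw W₁ (gaussianReal 0 1) μ)
    (hW₂ : HasLaw W₂ (gaussianReal 0 1) μ) (hindep : IndepFun W₁ W₂ μ) (k t : ℝ) :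
    ∫ ω in {ω | t ≤ W₁ ω ∧ k * (t - W₁ ω) ≤ W₂ ω}, W₁ ω ∂μ =
      stdNormalPDF t * (1 / 2 + k / √(2 * Real.pi) *
        ∫ u in Ioi 0, Real.exp (-(t * u)) * Real.exp (-((1 + k ^ 2) / 2 * u ^ 2))) := by
  have hS : MeasurableSet {p : ℝ × ℝ | k * (t - p.1) ≤ p.2} :=
    measurableSet_le (by fun_prop) (by fun_prop)
  have hid : Integrable (fun x : ℝ ↦ x) (gaussianReal 0 1) :=
    (memLp_id_gaussianReal 1).integrable le_rfl
  calc ∫ ω in {ω | t ≤ W₁ ω ∧ k * (t - W₁ ω) ≤ W₂ ω}, W₁ ω ∂μ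
    _ = ∫ x in Ici t, (gaussianReal 0 1).real (Ici (k * (t - x))) • x ∂gaussianReal 0 1 :=
      setIntegral_comp_fst_of_indepFun hW₁ hW₂ hindep hid measurableSet_Ici hS
    _ = _ := by
      rw [setIntegral_gaussianReal_real_Ici_smul, setIntegral_Ioi_stdNormalPDF_mul_stdNormalPDF]
      ring

lemma abs_setIntegral_wedge_sub_le (hW₁ : HasLaw W₁ (gaussianReal 0 1) μ)
    (hW₂ : HasLaw W₂ (gaussianReal 0 1) μ) (hindep : IndepFun W₁ W₂ μ) (k : ℝ) {t : ℝ}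
    (ht : 0 < t) :
    |(∫ ω in {ω | t ≤ W₁ ω ∧ k * (t - W₁ ω) ≤ W₂ ω}, W₁ ω ∂μ) -
        stdNormalPDF t * (1 / 2 + k / (√(2 * Real.pi) * t))| ≤
      |k| * (1 + k ^ 2) / √(2 * Real.pi) * stdNormalPDF t / t ^ 3 := by
  rw [setIntegral_wedge_eq hW₁ hW₂ hindep]
  set I := ∫ u in Ioi 0, Real.exp (-(t * u)) * Real.exp (-((1 + k ^ 2) / 2 * u ^ 2))
  have hI : |I - 1 / t| ≤ 2 * ((1 + k ^ 2) / 2) / t ^ 3 :=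
    abs_integral_exp_neg_mul_mul_exp_neg_mul_sq_sub_le ht (by positivity)
  have hpdf : 0 ≤ stdNormalPDF t := by unfold stdNormalPDF; positivity
  calc |stdNormalPDF t * (1 / 2 + k / √(2 * Real.pi) * I) -
        stdNormalPDF t * (1 / 2 + k / (√(2 * Real.pi) * t))|
    _ = |stdNormalPDF t * (k / √(2 * Real.pi)) * (I - 1 / t)| := by
      congr 1
      field_simp
      ring
    _ = stdNormalPDF t * (|k| / √(2 * Real.pi)) * |I - 1 / t| := by
      rw [abs_mul, abs_mul, abs_div, abs_of_nonneg hpdf, abs_of_nonneg (Real.sqrt_nonneg _)]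
    _ ≤ stdNormalPDF t * (|k| / √(2 * Real.pi)) * (2 * ((1 + k ^ 2) / 2) / t ^ 3) := by gcongr
    _ = |k| * (1 + k ^ 2) / √(2 * Real.pi) * stdNormalPDF t / t ^ 3 := by ring

theorem stmt10_general {ρ t : ℝ} (hρ : |ρ| < 1) (hW₁ : HasLaw W₁ (gaussianReal 0 1) μ)
    (hW₂ : HasLaw W₂ (gaussianReal 0 1) μ) (hindep : IndepFun W₁ W₂ μ) (ht : 0 < t) :
    |(∫ ω in {ω | t ≤ W₁ ω ∧ ρ * t ≤ ρ * W₁ ω + √(1 - ρ ^ 2) * W₂ ω}, W₁ ω ∂μ) -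
        stdNormalPDF t * (1 / 2 + (ρ / √(1 - ρ ^ 2)) / (√(2 * Real.pi) * t))| ≤
      |ρ / √(1 - ρ ^ 2)| * (1 + (ρ / √(1 - ρ ^ 2)) ^ 2) / √(2 * Real.pi) *
        stdNormalPDF t / t ^ 3 := by
  have hσ : 0 < √(1 - ρ ^ 2) := Real.sqrt_pos.2 (sub_pos.2 ((sq_lt_one_iff_abs_lt_one ρ).2 hρ))
  have hevent (x y : ℝ) : ρ * t ≤ ρ * x + √(1 - ρ ^ 2) * y ↔ ρ / √(1 - ρ ^ 2) * (t - x) ≤ y := by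
    rw [div_mul_eq_mul_div, div_le_iff₀' hσ, mul_sub, sub_le_iff_le_add']
  simp only [hevent]
  exact abs_setIntegral_wedge_sub_le hW₁ hW₂ hindep _ ht

end StandardNormal

/-- Bivariate normal truncated-mean expansion: for `Z₁ = W₁`, `Z₂ = ρW₁ + √(1−ρ²)W₂` with
`W₁, W₂` independent standard normals and `k = ρ/√(1−ρ²)`, there exist `C > 0` and `t₀ > 0` such
that for all `t ≥ t₀`,
`|E[Z₁ 1{Z₁ ≥ t, Z₂ ≥ ρt}] − φ(t)(1/2 + k/(√(2π)t))| ≤ C φ(t)/t³`. -/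
theorem stmt10 {Ω : Type*} [MeasurableSpace Ω] (μ : Measure Ω) [IsProbabilityMeasure μ]
    (ρ : ℝ) (hρ0 : 0 < ρ) (hρ1 : ρ < 1)
    (W₁ W₂ : Ω → ℝ) (hW₁ : Measurable W₁) (hW₂ : Measurable W₂)
    (hlaw₁ : μ.map W₁ = gaussianReal 0 1) (hlaw₂ : μ.map W₂ = gaussianReal 0 1)
    (hindep : IndepFun W₁ W₂ μ) :
    ∃ C > (0 : ℝ), ∃ t₀ > (0 : ℝ), ∀ t ≥ t₀,
      |(∫ ω in {ω | t ≤ W₁ ω ∧ ρ * t ≤ ρ * W₁ ω + Real.sqrt (1 - ρ ^ 2) * W₂ ω}, W₁ ω ∂μ) -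
          stdNormalPDF t * (1 / 2 +
            (ρ / Real.sqrt (1 - ρ ^ 2)) / (Real.sqrt (2 * Real.pi) * t))| ≤
        C * stdNormalPDF t / t ^ 3 := by
  have hσ : 0 < √(1 - ρ ^ 2) := Real.sqrt_pos.2 (by nlinarith)
  exact ⟨_, by positivity, 1, one_pos, fun t ht ↦ stmt10_general (abs_lt.2 ⟨by linarith, hρ1⟩)
    ⟨hW₁.aemeasurable, hlaw₁⟩ ⟨hW₂.aemeasurable, hlaw₂⟩ hindep (by linarith)⟩
end

section
/- Let m be a positive integer and let W and Z be random vectors in ℝ^m defined on a common probability space, where Z has a centered Gaussian law N(0, Σ). Let A ⊆ ℝ^m be a nonempty convex Borel set with 0 < P(Z ∉ A) < 1, and set s_A = log(1/P(Z ∉ A)) > 0. Fix constants α > 0, A₀ > 0, Δ ∈ (0, 1), ε₀ > 0, put p = |log Δ| + s_A and ε* = e·A₀·p^α·Δ, and suppose: (i) E[ ‖W − Z‖^p ] ≤ (A₀ p^α Δ)^p; (ii) ε* ≤ ε₀; and (iii) there is a nondecreasing function r_A : (0, ε₀] → [0, ∞) such that P(Z ∈ A_ε \ A_{−ε}) / P(Z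 ∉ A) ≤ r_A(ε) for all 0 < ε ≤ ε₀, where A_ε = {x ∈ ℝ^m : dist(x, A) ≤ ε} and A_{−ε} = {x ∈ ℝ^m : dist(x, A^c) > ε}. Then | P(W ∉ A)/P(Z ∉ A) − 1 | ≤ r_A(ε*) + Δ. -/
open MeasureTheory ProbabilityTheory

/-!
`W` and `Z` can lie on different sides of `A` only if `Z` is within `ε` of both `A` and `Aᶜ`, or
`W` and `Z` are at distance at least `ε`. Taking `ε = e · B`, where `B ^ p` bounds the `p`-th moment
of the distance, Markov's inequality bounds the probability of the second event by `e⁻ᵖ`; the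
exponent `p = |log Δ| + log (1 / P(Z ∉ A))` is chosen so that `e⁻ᵖ ≤ Δ · P(Z ∉ A)`.
-/

/-- The strip `A_ε \ A_{-ε}` of width `ε` around the boundary of `A`. Since `Metric.infDist` to `∅`
is `0`, the strip around `∅` or `univ` is the whole space when `0 ≤ ε`. -/
def boundaryStrip {E : Type*} [PseudoMetricSpace E] (A : Set E) (ε : ℝ) : Set E :=
  {x | Metric.infDist x A ≤ ε} \ {x | ε < Metric.infDist x Aᶜ}

theorem mem_boundaryStrip_of_dist_le {E : Type*} [PseudoMetricSpace E] {A : Set E} {ε : ℝ}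
    {x y : E} (hdist : dist x y ≤ ε) (hxy : ¬(x ∈ A ↔ y ∈ A)) : x ∈ boundaryStrip A ε := by
  have infDist_le {S : Set E} (hS : x ∈ S ∨ y ∈ S) : Metric.infDist x S ≤ ε := by
    rcases hS with hx | hy
    · exact (Metric.infDist_zero_of_mem hx).trans_le (dist_nonneg.trans hdist)
    · exact (Metric.infDist_le_dist_of_mem hy).trans hdist
  refine ⟨infDist_le ?_, not_lt.mpr (infDist_le ?_)⟩
  · tauto
  · simp only [Set.mem_compl_iff]
    tauto

theorem exp_neg_abs_log_add_log_one_div_le {a b : ℝ} (ha : 0 < a) (hb : 0 < b) :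
    Real.exp (-(|Real.log a| + Real.log (1 / b))) ≤ a * b :=
  calc Real.exp (-(|Real.log a| + Real.log (1 / b)))
      = Real.exp (-|Real.log a|) * b := by
        rw [one_div, Real.log_inv, neg_add, neg_neg, Real.exp_add, Real.exp_log hb]
    _ ≤ Real.exp (Real.log a) * b := by gcongr; exact neg_abs_le _
    _ = a * b := by rw [Real.exp_log ha]

section Measure

variable {Ω : Type*} [MeasurableSpace Ω] {μ : Measure Ω}

theorem abs_measureReal_sub_le_of_symmDiff_subset [IsFiniteMeasure μ] {s t u : Set Ω}
    (h : symmDiff s t ⊆ u) : |μ.real s - μ.real t| ≤ μ.real u := by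
  have hs : s ⊆ t ∪ u := by
    rw [← Set.sdiff_subset_iff]
    exact Set.subset_union_left.trans h
  have ht : t ⊆ s ∪ u := by
    rw [← Set.sdiff_subset_iff]
    exact Set.subset_union_right.trans h
  rw [abs_sub_le_iff, sub_le_iff_le_add', sub_le_iff_le_add']
  exact ⟨(measureReal_mono hs).trans (measureReal_union_le t u),
    (measureReal_mono ht).trans (measureReal_union_le s u)⟩

theorem measureReal_mul_le_le_rpow_neg_of_lintegral_rpow_le {f : Ω → ℝ} (hf : AEMeasurable f μ)
    {p B c : ℝ} (hp : 0 < p) (hB : 0 < B) (hc : 0 < c)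
    (hmoment : ∫⁻ ω, ENNReal.ofReal (f ω ^ p) ∂μ ≤ ENNReal.ofReal (B ^ p)) :
    μ.real {ω | c * B ≤ f ω} ≤ c ^ (-p) := by
  have hcB : 0 < (c * B) ^ p := by positivity
  refine ENNReal.toReal_le_of_le_ofReal (by positivity) ?_
  calc μ {ω | c * B ≤ f ω}
      ≤ μ {ω | ENNReal.ofReal ((c * B) ^ p) ≤ ENNReal.ofReal (f ω ^ p)} :=
        measure_mono fun ω hω =>
          ENNReal.ofReal_le_ofReal (Real.rpow_le_rpow (by positivity) hω hp.le)
    _ ≤ (∫⁻ ω, ENNReal.ofReal (f ω ^ p) ∂μ) / ENNReal.ofReal ((c * B) ^ p) :=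
        meas_ge_le_lintegral_div (hf.pow_const p).ennreal_ofReal
          (ENNReal.ofReal_pos.mpr hcB).ne' ENNReal.ofReal_ne_top
    _ ≤ ENNReal.ofReal (B ^ p) / ENNReal.ofReal ((c * B) ^ p) := by gcongr
    _ = ENNReal.ofReal (c ^ (-p)) := by
        rw [← ENNReal.ofReal_div_of_pos hcB, Real.mul_rpow hc.le hB.le, Real.rpow_neg hc.le]
        congr 1
        field_simp

variable {E : Type*} [PseudoMetricSpace E] [IsFiniteMeasure μ]

theorem abs_measureReal_notMem_sub_le (W Z : Ω → E) (A : Set E) (ε : ℝ) :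
    |μ.real {ω | W ω ∉ A} - μ.real {ω | Z ω ∉ A}| ≤
      μ.real {ω | Z ω ∈ boundaryStrip A ε} + μ.real {ω | ε ≤ dist (W ω) (Z ω)} := by
  refine (abs_measureReal_sub_le_of_symmDiff_subset fun ω hω => ?_).trans
    (measureReal_union_le _ _)
  rcases le_total ε (dist (W ω) (Z ω)) with hfar | hnear
  · exact Or.inr hfar
  · refine Or.inl (mem_boundaryStrip_of_dist_le (dist_comm (W ω) (Z ω) ▸ hnear) ?_)
    simp only [Set.mem_symmDiff, Set.mem_ofPred_eq] at hω
    tauto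

theorem abs_measureReal_notMem_div_sub_one_le {W Z : Ω → E} {A : Set E} {p B Δ : ℝ}
    (hdist : AEMeasurable (fun ω => dist (W ω) (Z ω)) μ) (hZ : 0 < μ.real {ω | Z ω ∉ A})
    (hp : 0 < p) (hB : 0 < B) (hΔ : Real.exp (-p) ≤ Δ * μ.real {ω | Z ω ∉ A})
    (hmoment : ∫⁻ ω, ENNReal.ofReal (dist (W ω) (Z ω) ^ p) ∂μ ≤ ENNReal.ofReal (B ^ p)) :
    |μ.real {ω | W ω ∉ A} / μ.real {ω | Z ω ∉ A} - 1| ≤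
      μ.real {ω | Z ω ∈ boundaryStrip A (Real.exp 1 * B)} / μ.real {ω | Z ω ∉ A} + Δ := by
  have hfar : μ.real {ω | Real.exp 1 * B ≤ dist (W ω) (Z ω)} ≤ Δ * μ.real {ω | Z ω ∉ A} :=
    (measureReal_mul_le_le_rpow_neg_of_lintegral_rpow_le hdist hp hB (Real.exp_pos 1)
      hmoment).trans (Real.exp_one_rpow (-p) ▸ hΔ)
  rw [div_sub_one hZ.ne', abs_div, abs_of_pos hZ, div_add' _ _ _ hZ.ne']
  gcongr
  exact (abs_measureReal_notMem_sub_le W Z A _).trans (by gcongr)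

theorem stmt18_general {W Z : Ω → E} {A : Set E} {α A₀ Δ ε₀ p εstar : ℝ} {rA : ℝ → ℝ}
    (hdist : AEMeasurable (fun ω => dist (W ω) (Z ω)) μ)
    (hPZpos : 0 < μ.real {ω | Z ω ∉ A}) (hPZlt : μ.real {ω | Z ω ∉ A} < 1)
    (hA₀ : 0 < A₀) (hΔ : 0 < Δ)
    (hp : p = |Real.log Δ| + Real.log (1 / μ.real {ω | Z ω ∉ A}))
    (hεstar : εstar = Real.exp 1 * A₀ * p ^ α * Δ)
    (hmoment : ∫⁻ ω, ENNReal.ofReal (dist (W ω) (Z ω) ^ p) ∂μ ≤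
      ENNReal.ofReal ((A₀ * p ^ α * Δ) ^ p))
    (hεstar₀ : εstar ≤ ε₀)
    (hrA : ∀ ε : ℝ, 0 < ε → ε ≤ ε₀ →
      μ.real {ω | Z ω ∈ boundaryStrip A ε} / μ.real {ω | Z ω ∉ A} ≤ rA ε) :
    |μ.real {ω | W ω ∉ A} / μ.real {ω | Z ω ∉ A} - 1| ≤ rA εstar + Δ := by
  have hp_pos : 0 < p :=
    hp ▸ add_pos_of_nonneg_of_pos (abs_nonneg _) (Real.log_pos (one_lt_one_div hPZpos hPZlt))
  have hexp : Real.exp (-p) ≤ Δ * μ.real {ω | Z ω ∉ A} :=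
    hp ▸ exp_neg_abs_log_add_log_one_div_le hΔ hPZpos
  have hεstar' : εstar = Real.exp 1 * (A₀ * p ^ α * Δ) := by rw [hεstar]; ring
  have hstrip := hrA εstar (by rw [hεstar]; positivity) hεstar₀
  rw [hεstar'] at hstrip ⊢
  exact (abs_measureReal_notMem_div_sub_one_le hdist hPZpos hp_pos (by positivity) hexp
    hmoment).trans (by gcongr)

end Measure

/-- Comparison of non-Gaussian and Gaussian tail probabilities of convex sets under a coupling
moment bound: if `Z` is a centered Gaussian vector `N(0, Σ)`, `A` is a nonempty convex Borel set
with `0 < P(Z ∉ A) < 1`, `s_A = log(1/P(Z ∉ A))`, `p = |log Δ| + s_A`,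
`ε* = e · A₀ · p^α · Δ`, `E[‖W − Z‖^p] ≤ (A₀ p^α Δ)^p`, `ε* ≤ ε₀`, and `r_A` is a nondecreasing
boundary-strip control on `(0, ε₀]`, then `|P(W ∉ A)/P(Z ∉ A) − 1| ≤ r_A(ε*) + Δ`. -/
theorem stmt18 (m : ℕ) (hm : 0 < m)
    {Ω : Type*} [MeasurableSpace Ω] (μ : Measure Ω) [IsProbabilityMeasure μ]
    (W Z : Ω → EuclideanSpace ℝ (Fin m)) (hW : Measurable W) (hZ : Measurable Z)
    (Cov : Matrix (Fin m) (Fin m) ℝ)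
    (hZlaw : ∀ v : EuclideanSpace ℝ (Fin m),
      μ.map (fun ω => ∑ i, v i * Z ω i) =
        gaussianReal 0 (∑ i, ∑ j, v i * Cov i j * v j).toNNReal)
    (A : Set (EuclideanSpace ℝ (Fin m))) (hA : A.Nonempty) (hAconv : Convex ℝ A)
    (hAmeas : MeasurableSet A)
    (hPZpos : 0 < (μ {ω | Z ω ∉ A}).toReal) (hPZlt : (μ {ω | Z ω ∉ A}).toReal < 1)
    (α A₀ Δ ε₀ : ℝ) (hα : 0 < α) (hA₀ : 0 < A₀) (hΔ0 : 0 < Δ) (hΔ1 : Δ < 1) (hε₀ : 0 < ε₀)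
    (p εstar : ℝ)
    (hp : p = |Real.log Δ| + Real.log (1 / (μ {ω | Z ω ∉ A}).toReal))
    (hεstar : εstar = Real.exp 1 * A₀ * p ^ α * Δ)
    (hmoment : (∫⁻ ω, ENNReal.ofReal (‖W ω - Z ω‖ ^ p) ∂μ) ≤
      ENNReal.ofReal ((A₀ * p ^ α * Δ) ^ p))
    (hεstar₀ : εstar ≤ ε₀)
    (rA : ℝ → ℝ)
    (hrA_nonneg : ∀ ε : ℝ, 0 < ε → ε ≤ ε₀ → 0 ≤ rA ε)
    (hrA_mono : ∀ ε₁ ε₂ : ℝ, 0 < ε₁ → ε₁ ≤ ε₂ → ε₂ ≤ ε₀ → rA ε₁ ≤ rA ε₂)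
    (hrA_strip : ∀ ε : ℝ, 0 < ε → ε ≤ ε₀ →
      (μ {ω | Z ω ∈ {x | Metric.infDist x A ≤ ε} \ {x | ε < Metric.infDist x Aᶜ}}).toReal /
          (μ {ω | Z ω ∉ A}).toReal ≤ rA ε) :
    |(μ {ω | W ω ∉ A}).toReal / (μ {ω | Z ω ∉ A}).toReal - 1| ≤ rA εstar + Δ := by
  exact stmt18_general (hW.dist hZ).aemeasurable hPZpos hPZlt hA₀ hΔ0 hp hεstar
    (by simpa only [dist_eq_norm] using hmoment) hεstar₀ hrA_strip
end
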